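/- arXiv:1701.04526 — 2 statements merged into one kernel-verified Lean document; each statement's English description precedes it below -/
import Mathlib

section
/- Let p ≡ 1 (mod 3) be prime and let η₃ be a multiplicative character of 𝔽_p^× of order 3. If λ ∈ 𝔽_p satisfies 1 + 2λ ≠ 0, then ₂𝔽₁[η₃, η₃²; ε; 1−λ³] = ₂𝔽₁[η₃, η₃²; ε; ((1−λ)/(1+2λ))³]. -/
open Finset

/-- Jacobi sum `J(A,B) = Σ_x A(x) B(1-x)`. -/
noncomputable def jacobiSum' {F : Type} [Field F] [Fintype F] (A B : MulChar F ℂ) : ℂ :=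
  ∑ x : F, A x * B (1 - x)

/-- One-variable finite-field period function `ℙ_D^{(1)}[A; B; C; λ]`. -/
noncomputable def P1 {F : Type} [Field F] [Fintype F] (A B C : MulChar F ℂ) (l : F) : ℂ :=
  ∑ y : F, A y * (C * A⁻¹) (1 - y) * B⁻¹ (1 - l * y)

/-- Two-variable finite-field Appell–Lauricella period function `ℙ_D^{(2)}`. -/
noncomputable def P2 {F : Type} [Field F] [Fintype F] (A B₁ B₂ C : MulChar F ℂ) (l₁ l₂ : F) : ℂ :=
  ∑ y : F, A y * (C * A⁻¹) (1 - y) * B₁⁻¹ (1 - l₁ * y) * B₂⁻¹ (1 - l₂ * y)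

/-- n-variable finite-field Appell–Lauricella period function `ℙ_D^{(n)}`. -/
noncomputable def PDn {F : Type} [Field F] [Fintype F] (n : ℕ) (A : MulChar F ℂ)
    (B : Fin n → MulChar F ℂ) (C : MulChar F ℂ) (l : Fin n → F) : ℂ :=
  ∑ y : F, A y * (C * A⁻¹) (1 - y) * ∏ i, (B i)⁻¹ (1 - l i * y)

/-- Normalized two-variable Appell–Lauricella function `𝔽_D^{(2)}`. -/
noncomputable def F2 {F : Type} [Field F] [Fintype F] (A B₁ B₂ C : MulChar F ℂ) (l₁ l₂ : F) : ℂ :=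
  P2 A B₁ B₂ C l₁ l₂ / jacobiSum' A (C * A⁻¹)

/-- Normalized n-variable Appell–Lauricella function `𝔽_D^{(n)}`. -/
noncomputable def FDn {F : Type} [Field F] [Fintype F] (n : ℕ) (A : MulChar F ℂ)
    (B : Fin n → MulChar F ℂ) (C : MulChar F ℂ) (l : Fin n → F) : ℂ :=
  PDn n A B C l / jacobiSum' A (C * A⁻¹)

/-- Finite-field Gauss hypergeometric function `₂𝔽₁[A,B;C;λ] = ℙ_D^{(1)}[B;A;C;λ]/J(B,C B̄)`. -/
noncomputable def twoF1 {F : Type} [Field F] [Fintype F] (A B C : MulChar F ℂ) (l : F) : ℂ :=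
  P1 B A C l / jacobiSum' B (C * B⁻¹)

open scoped Classical in
/-- `δ(x) = 1` if `x = 0`, else `0`. -/
noncomputable def deltaC {F : Type} [Field F] [Fintype F] (x : F) : ℂ :=
  if x = 0 then 1 else 0

noncomputable instance {F : Type} [Field F] [Fintype F] : Fintype (MulChar F ℂ) :=
  Fintype.ofFinite _

/-- Character binomial coefficient `(A choose χ) = -χ(-1) J(A, χ̄)`. -/
noncomputable def charBinom {F : Type} [Field F] [Fintype F] (A χ : MulChar F ℂ) : ℂ :=
  -χ (-1) * jacobiSum' A χ⁻¹

/-!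
For a cubic character `η` the period function is `S t = ∑ u, η (u * (u - 1) * (u - t) ^ 2)`, and
`S (1 - t) = S t`. Grouping the `u` by `z = u * (u - 1) / (u - t)` turns `S t`, up to a correction
at `z = -1`, into `∑ z, η z * N (z + z⁻¹)`, where `N` counts roots of a quadratic polynomial. The
cubic `x ^ 3 - 3 * x = z + z⁻¹` is solved by Cardano's formula `x = u + u⁻¹`, `u ^ 3 = z`, so this
sum is the difference of the sums of `N (x ^ 3 - 3 * x)` and of `N x`. Hence `S t + #F` counts the
points of the cubic `y * (1 - 3 * v - y) = t * v ^ 3`. At `t = 1 - l ^ 3` this is the member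
`l * (a ^ 3 + b ^ 3 + c ^ 3) = 3 * a * b * c` of the Hesse pencil, and the pencil has a linear
automorphism inducing `l ↦ (1 - l) / (1 + 2 * l)` on its parameter.
-/

section PowerMap

variable {F R : Type*} [Field F] [CommRing R]

section Finite

variable [Finite F]

lemma exists_isPrimitiveRoot_orderOf (η : MulChar F R) :
    ∃ ω : F, IsPrimitiveRoot ω (orderOf η) := by
  classical
  cases nonempty_fintype F
  obtain ⟨g, hg⟩ := IsCyclic.exists_ofOrder_eq_natCard (α := Fˣ)
  obtain ⟨k, hk⟩ := orderOf_dvd_of_pow_eq_one η.pow_card_eq_one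
  have hg' : IsPrimitiveRoot (g : F) (orderOf η * k) := by
    rw [← hk, ← Nat.card_eq_fintype_card, ← hg]
    exact IsPrimitiveRoot.coe_units_iff.2 (.orderOf g)
  exact ⟨g ^ k, hg'.pow (hk ▸ Fintype.card_pos) (mul_comm _ _)⟩

lemma apply_pow_orderOf_eq_one (η : MulChar F R) {z : F} (hz : z ≠ 0) :
    η (z ^ orderOf η) = 1 := by
  rw [map_pow, ← η.pow_apply' η.orderOf_pos.ne', pow_orderOf_eq_one, MulChar.one_apply hz.isUnit]

variable [IsDomain R]

lemma exists_pow_orderOf_eq (η : MulChar F R) {z : F} (hz : η z = 1) :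
    ∃ u, u ^ orderOf η = z := by
  obtain ⟨g, hg⟩ := IsCyclic.exists_monoid_generator (α := Fˣ)
  have exists_pow_eq (a : Fˣ) : ∃ n, g ^ n = a := Submonoid.mem_powers_iff _ _ |>.1 (hg a)
  have hz_unit : IsUnit z := MulChar.apply_ne_zero_iff.1 (hz ▸ one_ne_zero)
  obtain ⟨n, hn⟩ := exists_pow_eq hz_unit.unit
  have hzn : (g : F) ^ n = z := by simpa using congrArg Units.val hn
  have hηn : η ^ n = 1 := MulChar.eq_one_iff.2 fun a ↦ by
    obtain ⟨m, rfl⟩ := exists_pow_eq a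
    rw [MulChar.pow_apply_coe, Units.val_pow_eq_pow_val, map_pow, pow_right_comm, ← map_pow, hzn,
      hz, one_pow]
  obtain ⟨k, rfl⟩ := orderOf_dvd_of_pow_eq_one hηn
  exact ⟨g ^ k, by rw [pow_right_comm, ← pow_mul, hzn]⟩

end Finite

variable [Fintype F] [IsDomain R]

lemma card_pow_orderOf_eq [DecidableEq F] (η : MulChar F R) (z : F) :
    (#{u | u ^ orderOf η = z} : R) = ∑ i ∈ range (orderOf η), η z ^ i := by
  have hpos := η.orderOf_pos
  rcases eq_or_ne z 0 with rfl | hz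
  · simp [hpos.ne', Finset.filter_eq', η.map_zero, zero_pow_eq, hpos]
  have hroots : ({u | u ^ orderOf η = z} : Finset F) =
      (Polynomial.nthRoots (orderOf η) z).toFinset := by
    ext u
    simp [Polynomial.mem_nthRoots hpos]
  obtain ⟨ω, hω⟩ := exists_isPrimitiveRoot_orderOf η
  rw [hroots, Multiset.toFinset_card_of_nodup (hω.nthRoots_nodup hz), hω.card_nthRoots]
  split_ifs with h
  · obtain ⟨u, rfl⟩ := h
    have hu : u ≠ 0 := by rintro rfl; exact hz (zero_pow hpos.ne')
    simp [apply_pow_orderOf_eq_one η hu]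
  · have hne : η z - 1 ≠ 0 := sub_ne_zero.2 fun h1 ↦ h (exists_pow_orderOf_eq η h1)
    refine (mul_left_cancel₀ hne ?_).symm
    rw [mul_geom_sum, ← map_pow, apply_pow_orderOf_eq_one η hz, sub_self, Nat.cast_zero, mul_zero]

lemma sum_comp_eq_sum_card_fiber_mul {ι κ S : Type*} [Fintype ι] [Fintype κ] [DecidableEq κ]
    [NonAssocSemiring S] (g : ι → κ) (f : κ → S) :
    ∑ i, f (g i) = ∑ k, (#{i | g i = k} : S) * f k := by
  rw [← Finset.sum_fiberwise' univ g f]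
  exact Finset.sum_congr rfl fun k _ ↦ by rw [Finset.sum_const, nsmul_eq_mul]

lemma sum_comp_pow_orderOf (η : MulChar F R) (f : F → R) :
    ∑ u, f (u ^ orderOf η) = ∑ z, (∑ i ∈ range (orderOf η), η z ^ i) * f z := by
  have := Classical.decEq F
  rw [sum_comp_eq_sum_card_fiber_mul (· ^ orderOf η)]
  exact Finset.sum_congr rfl fun z _ ↦ by rw [card_pow_orderOf_eq]

end PowerMap

lemma apply_sq_eq_apply_inv {F R : Type*} [Field F] [Finite F] [CommRing R] {η : MulChar F R}
    (hη : orderOf η = 3) (z : F) :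
    η z ^ 2 = η z⁻¹ := by
  rcases eq_or_ne z 0 with rfl | hz
  · simp [η.map_zero]
  · rw [← map_pow, show z ^ 2 = z ^ orderOf η * z⁻¹ by rw [hη]; field_simp, map_mul,
      apply_pow_orderOf_eq_one η hz, one_mul]

section PrimitiveCubeRoot

variable {F : Type*} [Field F] {ω : F}

lemma sq_add_add_one_eq_zero (hω : IsPrimitiveRoot ω 3) : ω ^ 2 + ω + 1 = 0 := by
  have h := hω.geom_sum_eq_zero (by norm_num)
  simp only [Finset.sum_range_succ, Finset.sum_range_zero] at h
  linear_combination h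

lemma two_mul_add_one_sq (hω : IsPrimitiveRoot ω 3) : (2 * ω + 1) ^ 2 = -3 := by
  linear_combination 4 * sq_add_add_one_eq_zero hω

lemma three_ne_zero_of_isPrimitiveRoot (hω : IsPrimitiveRoot ω 3) : (3 : F) ≠ 0 := by
  exact_mod_cast hω.neZero'.out

lemma two_mul_add_one_ne_zero (hω : IsPrimitiveRoot ω 3) : 2 * ω + 1 ≠ 0 := fun h ↦
  three_ne_zero_of_isPrimitiveRoot hω <| by
    linear_combination two_mul_add_one_sq hω - (2 * ω + 1) * h

end PrimitiveCubeRoot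

section Cardano

variable {F : Type*} [Field F] [Fintype F] [DecidableEq F]

/-- The `x` for which `X ^ 2 - x * X + 1` splits, i.e. the traces `u + u⁻¹` of the elements of the
split torus. -/
def splitTraces (F : Type*) [Field F] [Fintype F] [DecidableEq F] : Finset F :=
  {x | ∃ u, u * (x - u) = 1}

lemma mem_splitTraces {x : F} : x ∈ splitTraces F ↔ ∃ u, u * (x - u) = 1 := by
  simp [splitTraces]

-- If `u` is a root of `X ^ 2 - c * X + 1`, `c = x ^ 3 - 3 * x`, then a root `α` of
-- `X ^ 2 - x * X + 1` with `α ^ 3 = u` satisfies `u = (x ^ 2 - 1) * α - x`.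
lemma mem_splitTraces_of_cubic_mem {ω : F} (hω : IsPrimitiveRoot ω 3) {x : F}
    (hx : x ^ 3 - 3 * x ∈ splitTraces F) : x ∈ splitTraces F := by
  rw [mem_splitTraces] at hx ⊢
  obtain ⟨u, hu⟩ := hx
  by_cases hx1 : x ^ 2 - 1 = 0
  · exact ⟨-(x * ω), by
      linear_combination -x ^ 2 * sq_add_add_one_eq_zero hω + hx1⟩
  · refine ⟨(u + x) / (x ^ 2 - 1), ?_⟩
    field_simp
    linear_combination hu

lemma mem_splitTraces_of_cubic_eq {ω : F} (hω : IsPrimitiveRoot ω 3) {x y : F}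
    (hxy : x ^ 3 - 3 * x = y ^ 3 - 3 * y) (hne : x ≠ y) : y ∈ splitTraces F := by
  have hquad : x ^ 2 + x * y + y ^ 2 = 3 :=
    mul_left_cancel₀ (sub_ne_zero.2 hne) (by linear_combination hxy)
  have hs := two_mul_add_one_ne_zero hω
  refine mem_splitTraces.2 ⟨(x + (1 + ω) * y) / (2 * ω + 1), ?_⟩
  rw [sub_div' hs, div_mul_div_comm, div_eq_one_iff_eq (mul_ne_zero hs hs)]
  linear_combination (y ^ 2 - 4) * sq_add_add_one_eq_zero hω - hquad

lemma sum_compl_splitTraces_cubic {M : Type*} [AddCommMonoid M] {ω : F}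
    (hω : IsPrimitiveRoot ω 3) (f : F → M) :
    ∑ x ∈ (splitTraces F)ᶜ, f (x ^ 3 - 3 * x) = ∑ x ∈ (splitTraces F)ᶜ, f x := by
  have hmaps : Set.MapsTo (fun x : F ↦ x ^ 3 - 3 * x)
      ((splitTraces F)ᶜ : Finset F) ((splitTraces F)ᶜ : Finset F) := fun x hx ↦
    mem_compl.2 fun h ↦ mem_compl.1 hx (mem_splitTraces_of_cubic_mem hω h)
  have hinj : Set.InjOn (fun x : F ↦ x ^ 3 - 3 * x) ((splitTraces F)ᶜ : Finset F) :=
    fun x _ y hy hxy ↦ by_contra fun hne ↦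
      mem_compl.1 hy (mem_splitTraces_of_cubic_eq hω hxy hne)
  exact Finset.sum_nbij _ hmaps hinj (surjOn_of_injOn_of_card_le _ hmaps hinj le_rfl)
    fun _ _ ↦ rfl

lemma card_add_inv_eq {x : F} (hx0 : x ≠ 0) (hx : x ^ 2 ≠ 4) :
    #{u | u + u⁻¹ = x} = if x ∈ splitTraces F then 2 else 0 := by
  have hroot (u : F) : u + u⁻¹ = x ↔ u * (x - u) = 1 := by
    rcases eq_or_ne u 0 with rfl | hu
    · simp [hx0.symm]
    · field_simp
      exact ⟨fun h ↦ by linear_combination -h, fun h ↦ by linear_combination -h⟩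
  simp_rw [hroot]
  split_ifs with h
  · obtain ⟨u, hu⟩ := mem_splitTraces.1 h
    refine Finset.card_eq_two.2 ⟨u, x - u, ?_, ?_⟩
    · intro h
      exact hx (by linear_combination 4 * hu + (2 * u - x) * h)
    · ext v
      simp only [mem_filter_univ, mem_insert, mem_singleton]
      rw [← sub_eq_zero (a := v), ← sub_eq_zero (a := v), ← mul_eq_zero]
      constructor <;> intro h <;> linear_combination hu - h
  · exact Finset.card_eq_zero.2 <| filter_eq_empty_iff.2 fun u _ hu ↦
      h (mem_splitTraces.2 ⟨u, hu⟩)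

lemma sum_comp_add_inv {S : Type*} [NonAssocSemiring S] {f : F → S} (h0 : f 0 = 0)
    (h4 : ∀ x, x ^ 2 = 4 → f x = 0) :
    ∑ u, f (u + u⁻¹) = 2 * ∑ x ∈ splitTraces F, f x := by
  have hterm (x : F) :
      (#{u | u + u⁻¹ = x} : S) * f x = if x ∈ splitTraces F then 2 * f x else 0 := by
    by_cases hx : x = 0 ∨ x ^ 2 = 4
    · have hfx : f x = 0 := hx.elim (fun h ↦ h ▸ h0) (h4 x)
      simp [hfx]
    · rw [not_or] at hx
      rw [card_add_inv_eq hx.1 hx.2]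
      split_ifs <;> simp
  rw [sum_comp_eq_sum_card_fiber_mul (fun u ↦ u + u⁻¹), Finset.mul_sum,
    Finset.sum_congr rfl fun x _ ↦ hterm x, Finset.sum_ite_mem, univ_inter]

-- `x ^ 3 - 3 * x = c` is solved by `x = u + u⁻¹`, where `u` is a cube root of a solution `z` of
-- `z + z⁻¹ = c`.
lemma sum_mul_comp_add_inv {F R : Type*} [Field F] [Fintype F] [CommRing R] [IsDomain R] [NeZero (2 : R)]
    {η : MulChar F R} (hη : orderOf η = 3) (f : F → R) :
    ∑ z, η z * f (z + z⁻¹) = ∑ x, f (x ^ 3 - 3 * x) - ∑ x, f x := by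
  classical
  obtain ⟨ω, hω⟩ := exists_isPrimitiveRoot_orderOf η
  rw [hη] at hω
  have hcube (u : F) : u ^ 3 + (u ^ 3)⁻¹ = (u + u⁻¹) ^ 3 - 3 * (u + u⁻¹) := by
    rcases eq_or_ne u 0 with rfl | hu
    · simp
    · field_simp
      ring
  have hsq : ∑ z, η z ^ 2 * f (z + z⁻¹) = ∑ z, η z * f (z + z⁻¹) := by
    refine Fintype.sum_equiv (Equiv.inv F) _ _ fun z ↦ ?_
    rw [Equiv.inv_apply, inv_inv, add_comm z⁻¹, apply_sq_eq_apply_inv hη]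
  have hcubes : ∑ u, f ((u + u⁻¹) ^ 3 - 3 * (u + u⁻¹)) =
      ∑ z, f (z + z⁻¹) + 2 * ∑ z, η z * f (z + z⁻¹) := by
    simp_rw [← hcube]
    rw [← hη, sum_comp_pow_orderOf η fun z ↦ f (z + z⁻¹), hη, two_mul]
    nth_rw 1 [← hsq]
    simp only [← Finset.sum_add_distrib, Finset.sum_range_succ, Finset.sum_range_zero]
    exact Finset.sum_congr rfl fun z _ ↦ by ring
  have hsplit : ∑ u, (f ((u + u⁻¹) ^ 3 - 3 * (u + u⁻¹)) - f (u + u⁻¹)) =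
      2 * ∑ x ∈ splitTraces F, (f (x ^ 3 - 3 * x) - f x) := by
    refine sum_comp_add_inv (f := fun x ↦ f (x ^ 3 - 3 * x) - f x) (by simp) fun x hx ↦ ?_
    rw [sub_eq_zero, show x ^ 3 - 3 * x = x by linear_combination x * hx]
  refine mul_left_cancel₀ (two_ne_zero (α := R)) ?_
  rw [← Finset.sum_add_sum_compl (splitTraces F) fun x ↦ f (x ^ 3 - 3 * x),
    ← Finset.sum_add_sum_compl (splitTraces F) f, sum_compl_splitTraces_cubic hω,
    add_sub_add_right_eq_sub, ← Finset.sum_sub_distrib, ← hsplit, Finset.sum_sub_distrib, hcubes,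
    add_sub_cancel_left]

end Cardano

section CubicSum

variable {F R : Type*} [Field F] [Fintype F] [CommRing R]

/-- The sum of `η (u * (u - 1) * (u - t) ^ 2)` over `u`, which for a cubic character `η` is the
period function `P1 (η ^ 2) η 1 t` after the substitution `u ↦ u⁻¹`. -/
def cubicSum (η : MulChar F R) (t : F) : R :=
  ∑ u, η (u * (u - 1) * (u - t) ^ 2)

lemma cubicSum_one_sub (η : MulChar F R) (t : F) : cubicSum η (1 - t) = cubicSum η t := by
  refine Fintype.sum_equiv (Equiv.subLeft 1) _ _ fun u ↦ congrArg η ?_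
  rw [Equiv.subLeft_apply]
  ring

lemma P1_sq_self_one_eq_cubicSum {F : Type} [Field F] [Fintype F] {η : MulChar F ℂ}
    (hη : orderOf η = 3) (t : F) : P1 (η ^ 2) η 1 t = cubicSum η t := by
  have hinv : (η ^ 2)⁻¹ = η :=
    inv_eq_of_mul_eq_one_left (by rw [← pow_succ', ← pow_orderOf_eq_one η, hη])
  refine Fintype.sum_equiv (Equiv.inv F) _ _ fun y ↦ ?_
  rw [one_mul, hinv, MulChar.inv_apply', ← apply_sq_eq_apply_inv hη,
    MulChar.pow_apply' _ two_ne_zero, ← map_pow, ← map_pow, ← map_mul, ← map_mul, Equiv.inv_apply]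
  rcases eq_or_ne y 0 with rfl | hy
  · simp
  have hfactor : y ^ 2 * (1 - y) * (1 - t * y) ^ 2 =
      (y ^ 2) ^ orderOf η * (y⁻¹ * (y⁻¹ - 1) * (y⁻¹ - t) ^ 2) := by
    rw [hη]
    field_simp
  rw [hfactor, map_mul, apply_pow_orderOf_eq_one η (pow_ne_zero 2 hy), one_mul]

variable [DecidableEq F]

/-- The number of roots of `u ^ 2 = c * (u - t)`, i.e. of points over `c` of the conic bundle
through which `cubicSum` becomes a point count. -/
def quadraticRootCount (t c : F) : ℕ :=
  #{u | u ^ 2 = c * (u - t)}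

lemma quadraticRootCount_zero (t : F) : quadraticRootCount t 0 = 1 := by
  simp [quadraticRootCount, Finset.filter_eq']

lemma sum_quadraticRootCount_add_one {t : F} (ht : t ≠ 0) :
    ∑ c, quadraticRootCount t c + 1 = Fintype.card F := by
  have hterm (u : F) : #{c | u ^ 2 = c * (u - t)} + (if u = t then 1 else 0) = 1 := by
    split_ifs with hut
    · simp [hut, ht]
    · refine Finset.card_eq_one.2 ⟨u ^ 2 / (u - t), ?_⟩
      ext c
      simp [eq_div_iff (sub_ne_zero.2 hut), eq_comm]
  calc ∑ c, quadraticRootCount t c + 1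
    _ = ∑ u, #{c | u ^ 2 = c * (u - t)} + 1 := by
        simp only [quadraticRootCount, Finset.card_filter]
        rw [Finset.sum_comm]
    _ = ∑ u, (#{c | u ^ 2 = c * (u - t)} + if u = t then 1 else 0) := by
        rw [Finset.sum_add_distrib, Fintype.sum_ite_eq']
    _ = Fintype.card F := by simp [hterm]

lemma card_mul_sub_one_eq_quadraticRootCount (t : F) {z : F} (hz0 : z ≠ 0) (hz1 : z ≠ -1) :
    #{u | u * (u - 1) = z * (u - t)} = quadraticRootCount t (z + z⁻¹ + 2) := by
  have hz1' : z + 1 ≠ 0 := fun h ↦ hz1 (eq_neg_of_add_eq_zero_left h)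
  refine Finset.card_equiv (Equiv.mulLeft₀ ((z + 1) / z) (div_ne_zero hz1' hz0)) fun u ↦ ?_
  simp only [mem_filter_univ, Equiv.mulLeft₀_apply]
  have hscale : ((z + 1) / z * u) ^ 2 - (z + z⁻¹ + 2) * ((z + 1) / z * u - t) =
      ((z + 1) / z) ^ 2 * (u * (u - 1) - z * (u - t)) := by
    field_simp
    ring
  rw [← sub_eq_zero, ← sub_eq_zero (b := (z + z⁻¹ + 2) * _), hscale, mul_eq_zero_iff_left]
  exact pow_ne_zero 2 (div_ne_zero hz1' hz0)

variable [IsDomain R] {η : MulChar F R}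

lemma cubicSum_eq_sum_mul_card (hη : orderOf η = 3) (t : F) :
    cubicSum η t = ∑ z, η z * #{u | u * (u - 1) = z * (u - t)} := by
  have hsum : ∑ z, η z = 0 := MulChar.sum_eq_zero_of_ne_one fun h ↦ by simp [h] at hη
  have hterm (u : F) : η (u * (u - 1) * (u - t) ^ 2) =
      ∑ z, if u * (u - 1) = z * (u - t) then η z else 0 := by
    rcases eq_or_ne u t with rfl | hut
    · by_cases hu : u * (u - 1) = 0 <;> simp [hu, hsum, η.map_zero]
    have hut' := sub_ne_zero.2 hut
    simp_rw [← div_eq_iff hut']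
    rw [Fintype.sum_ite_eq, show u * (u - 1) * (u - t) ^ 2 =
      (u - t) ^ orderOf η * (u * (u - 1) / (u - t)) by rw [hη]; field_simp, map_mul,
      apply_pow_orderOf_eq_one η hut', one_mul]
  simp only [cubicSum, hterm, Finset.card_filter, Nat.cast_sum, Nat.cast_ite, Nat.cast_one,
    Nat.cast_zero, Finset.mul_sum, mul_ite, mul_one, mul_zero]
  exact Finset.sum_comm

lemma cubicSum_add_one (hη : orderOf η = 3) (t : F) :
    cubicSum η t + 1 =
      ∑ z, η z * quadraticRootCount t (z + z⁻¹ + 2) + (#{u | u ^ 2 = t} : R) := by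
  have hneg : η (-1) = 1 :=
    MulChar.val_neg_one_eq_one_of_odd_order (hη ▸ by decide) (pow_orderOf_eq_one η)
  have hterm (z : F) : η z * (#{u | u * (u - 1) = z * (u - t)} : R) + (if z = -1 then 1 else 0) =
      η z * quadraticRootCount t (z + z⁻¹ + 2) + if z = -1 then (#{u | u ^ 2 = t} : R) else 0 := by
    rcases eq_or_ne z 0 with rfl | hz0
    · simp [η.map_zero]
    split_ifs with hz1
    · have hsquare (u : F) : u * (u - 1) = -1 * (u - t) ↔ u ^ 2 = t := by
        rw [← sub_eq_zero, ← sub_eq_zero (b := t)]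
        ring_nf
      simp_rw [hz1, hneg, hsquare]
      rw [show (-1 : F) + (-1)⁻¹ + 2 = 0 by norm_num, quadraticRootCount_zero]
      ring
    · rw [card_mul_sub_one_eq_quadraticRootCount t hz0 hz1]
  rw [cubicSum_eq_sum_mul_card hη, ← Fintype.sum_ite_eq' (-1 : F) fun _ ↦ (1 : R),
    ← Finset.sum_add_distrib, Finset.sum_congr rfl fun z _ ↦ hterm z, Finset.sum_add_distrib,
    Fintype.sum_ite_eq']

end CubicSum

section CubicCurve

variable {F : Type*} [Field F] [Fintype F] [DecidableEq F]

/-- The number of affine points `(v, y)` on the cubic `y * (1 - 3 * v - y) = t * v ^ 3`, which for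
`t = 1 - l ^ 3` is a linear model of the member `l * (a ^ 3 + b ^ 3 + c ^ 3) = 3 * a * b * c` of the
Hesse pencil. -/
def cubicCurveCard (t : F) : ℕ :=
  #{q : F × F | q.2 * (1 - 3 * q.1 - q.2) = t * q.1 ^ 3}

lemma cubicCurveCard_eq_sum (t : F) :
    cubicCurveCard t = ∑ v, #{y | y * (1 - 3 * v - y) = t * v ^ 3} := by
  simp only [cubicCurveCard, Finset.card_filter, Fintype.sum_prod_type]

lemma card_fiber_inv_eq_quadraticRootCount (t : F) {s : F} (hs : s ≠ 0) (hs3 : s ≠ 3) :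
    #{y | y * (1 - 3 * s⁻¹ - y) = t * s⁻¹ ^ 3} = quadraticRootCount t (s * (s - 3) ^ 2) := by
  have hs3' := sub_ne_zero.2 hs3
  have hk : s ^ 2 * (s - 3) ≠ 0 := mul_ne_zero (pow_ne_zero 2 hs) hs3'
  refine Finset.card_equiv (Equiv.mulLeft₀ (s ^ 2 * (s - 3)) hk) fun y ↦ ?_
  simp only [mem_filter_univ, Equiv.mulLeft₀_apply]
  have hscale : (s ^ 2 * (s - 3) * y) ^ 2 - s * (s - 3) ^ 2 * (s ^ 2 * (s - 3) * y - t) =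
      -(s ^ 4 * (s - 3) ^ 2) * (y * (1 - 3 * s⁻¹ - y) - t * s⁻¹ ^ 3) := by
    field_simp
    ring
  rw [← sub_eq_zero, ← sub_eq_zero (b := s * (s - 3) ^ 2 * _), hscale, mul_eq_zero_iff_left]
  exact neg_ne_zero.2 (mul_ne_zero (pow_ne_zero 4 hs) (pow_ne_zero 2 hs3'))

lemma card_fiber_inv_three_eq {ω : F} (hω : IsPrimitiveRoot ω 3) (t : F) :
    #{y | y * (1 - 3 * (3 : F)⁻¹ - y) = t * (3 : F)⁻¹ ^ 3} = #{u | u ^ 2 = t} := by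
  have h3 := three_ne_zero_of_isPrimitiveRoot hω
  have hk : (2 * ω + 1) * 3 ≠ 0 := mul_ne_zero (two_mul_add_one_ne_zero hω) h3
  refine Finset.card_equiv (Equiv.mulLeft₀ ((2 * ω + 1) * 3) hk) fun y ↦ ?_
  simp only [mem_filter_univ, Equiv.mulLeft₀_apply]
  have hscale : ((2 * ω + 1) * 3 * y) ^ 2 - t =
      3 ^ 3 * (y * (1 - 3 * (3 : F)⁻¹ - y) - t * (3 : F)⁻¹ ^ 3) := by
    rw [mul_pow, mul_pow, two_mul_add_one_sq hω]
    field_simp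
    ring
  rw [← sub_eq_zero, ← sub_eq_zero (b := t), hscale, mul_eq_zero_iff_left (pow_ne_zero 3 h3)]

lemma card_fiber_zero_eq_two (t : F) : #{y | y * (1 - 3 * 0 - y) = t * 0 ^ 3} = 2 := by
  refine Finset.card_eq_two.2 ⟨0, 1, zero_ne_one, ?_⟩
  ext y
  simp [sub_eq_zero, eq_comm (a := (1 : F))]

lemma sum_quadraticRootCount_cubic_add_card {ω : F} (hω : IsPrimitiveRoot ω 3) (t : F) :
    ∑ x, quadraticRootCount t (x ^ 3 - 3 * x + 2) + #{u | u ^ 2 = t} = cubicCurveCard t := by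
  have h3 := three_ne_zero_of_isPrimitiveRoot hω
  have hcubic (s : F) : (s - 2) ^ 3 - 3 * (s - 2) + 2 = s * (s - 3) ^ 2 := by ring
  have hterm (s : F) :
      quadraticRootCount t ((s - 2) ^ 3 - 3 * (s - 2) + 2) +
          (if s = 3 then #{u | u ^ 2 = t} else 0) + (if s = 0 then 1 else 0) =
        #{y | y * (1 - 3 * s⁻¹ - y) = t * s⁻¹ ^ 3} + if s = 3 then 1 else 0 := by
    rw [hcubic]
    rcases eq_or_ne s 0 with rfl | hs
    · rw [inv_zero, card_fiber_zero_eq_two, zero_mul, quadraticRootCount_zero, if_neg h3.symm,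
        if_pos rfl, if_neg h3.symm]
    rcases eq_or_ne s 3 with rfl | hs3
    · rw [card_fiber_inv_three_eq hω, sub_self, zero_pow two_ne_zero, mul_zero,
        quadraticRootCount_zero, if_pos rfl, if_neg h3, if_pos rfl, add_zero, add_comm]
    · rw [card_fiber_inv_eq_quadraticRootCount t hs hs3, if_neg hs, if_neg hs3, if_neg hs3]
  have hsum := Finset.sum_congr rfl fun s (_ : s ∈ univ) ↦ hterm s
  simp only [Finset.sum_add_distrib, Fintype.sum_ite_eq'] at hsum
  have hshift := Equiv.sum_comp (Equiv.subRight (2 : F)) fun x ↦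
    quadraticRootCount t (x ^ 3 - 3 * x + 2)
  have hinv := Equiv.sum_comp (Equiv.inv F) fun v ↦ #{y | y * (1 - 3 * v - y) = t * v ^ 3}
  simp only [Equiv.subRight_apply, Equiv.inv_apply] at hshift hinv
  rw [hshift, hinv, ← cubicCurveCard_eq_sum] at hsum
  exact Nat.add_right_cancel hsum

lemma cubicSum_add_card {R : Type*} [CommRing R] [IsDomain R] [NeZero (2 : R)] {η : MulChar F R}
    (hη : orderOf η = 3) {t : F} (ht : t ≠ 0) :
    cubicSum η t + Fintype.card F = cubicCurveCard t := by
  obtain ⟨ω, hω⟩ := exists_isPrimitiveRoot_orderOf η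
  rw [hη] at hω
  have hcardano := sum_mul_comp_add_inv hη fun x ↦ (quadraticRootCount t (x + 2) : R)
  have hshift := Equiv.sum_comp (Equiv.addRight (2 : F)) fun x ↦ (quadraticRootCount t x : R)
  simp only [Equiv.coe_addRight] at hshift
  have hcount := congrArg (Nat.cast (R := R)) (sum_quadraticRootCount_add_one ht)
  have hcurve := congrArg (Nat.cast (R := R)) (sum_quadraticRootCount_cubic_add_card hω t)
  push_cast at hcount hcurve
  linear_combination cubicSum_add_one hη t + hcardano - hshift - hcount + hcurve

-- With `X = l * (a + b) + c` and `Y = l * (ω * a + ω ^ 2 * b) + c`, the coordinates `v = c / X` and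
-- `y = -Y / X` identify the curve with a member of the Hesse pencil; `e` is the discrete Fourier
-- transform of `(a, b, c)`, which permutes the pencil, read in these coordinates.
lemma cubicCurveCard_one_sub_pow_three {ω : F} (hω : IsPrimitiveRoot ω 3) {l : F} (hl0 : l ≠ 0)
    (hl1 : 1 - l ≠ 0) (hl2 : 1 + 2 * l ≠ 0) :
    cubicCurveCard (1 - ((1 - l) / (1 + 2 * l)) ^ 3) = cubicCurveCard (1 - l ^ 3) := by
  have hs := two_mul_add_one_ne_zero hω
  have h3 := three_ne_zero_of_isPrimitiveRoot hω
  set k := (2 * ω + 1) * l / (1 - l) with hk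
  have hk0 : k ≠ 0 := div_ne_zero (mul_ne_zero hs hl0) hl1
  have hc0 : 3 * l / (1 + 2 * l) ≠ 0 := div_ne_zero (mul_ne_zero h3 hl0) hl2
  let e (q : F × F) : F × F :=
    ((1 - 3 * l / (1 + 2 * l) * q.1) / (1 - l),
      k * (q.2 + ω + (1 - ω) * q.1) - (1 - 3 * l / (1 + 2 * l) * q.1))
  have he : e.Injective := by
    intro q r h
    simp only [e, Prod.mk.injEq] at h
    obtain ⟨h1, h2⟩ := h
    have hfst : q.1 = r.1 := by
      refine mul_left_cancel₀ hc0 (?_ : 3 * l / (1 + 2 * l) * q.1 = 3 * l / (1 + 2 * l) * r.1)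
      linear_combination -(div_left_inj' hl1).1 h1
    rw [hfst] at h2
    refine Prod.ext hfst ?_
    simpa [hk0] using h2
  refine Finset.card_bijective e he.bijective_of_finite fun q ↦ ?_
  simp only [mem_filter_univ]
  have hscale : (e q).2 * (1 - 3 * (e q).1 - (e q).2) - (1 - l ^ 3) * (e q).1 ^ 3 =
      k ^ 2 * (q.2 * (1 - 3 * q.1 - q.2) - (1 - ((1 - l) / (1 + 2 * l)) ^ 3) * q.1 ^ 3) := by
    have hω2 := sq_add_add_one_eq_zero hω
    simp only [e, hk]
    field_simp
    grind
  rw [← sub_eq_zero, ← sub_eq_zero (b := (1 - l ^ 3) * _), hscale, mul_eq_zero_iff_left]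
  exact pow_ne_zero 2 hk0

end CubicCurve

lemma cubicSum_one_sub_pow_three {F R : Type*} [Field F] [Fintype F] [CommRing R] [IsDomain R]
    [NeZero (2 : R)] {η : MulChar F R} (hη : orderOf η = 3) {l : F} (hl : 1 + 2 * l ≠ 0) :
    cubicSum η (1 - l ^ 3) = cubicSum η (((1 - l) / (1 + 2 * l)) ^ 3) := by
  classical
  obtain ⟨ω, hω⟩ := exists_isPrimitiveRoot_orderOf η
  rw [hη] at hω
  rw [← cubicSum_one_sub η (((1 - l) / (1 + 2 * l)) ^ 3)]
  rcases eq_or_ne l 0 with rfl | hl0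
  · rw [← cubicSum_one_sub]
    simp
  rcases eq_or_ne (1 - l) 0 with hl1 | hl1
  · rw [← cubicSum_one_sub, ← sub_eq_zero.1 hl1]
    simp
  have hparam : (1 + 2 * l) ^ 3 * (1 - l) * (1 - ((1 - l) / (1 + 2 * l)) ^ 3) =
      9 * l * (1 - l ^ 3) := by
    field_simp
    ring
  have h9 : (9 : F) ≠ 0 := by
    rw [show (9 : F) = 3 ^ 2 by norm_num]
    exact pow_ne_zero 2 (three_ne_zero_of_isPrimitiveRoot hω)
  rcases eq_or_ne (1 - l ^ 3) 0 with hl3 | hl3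
  · have hl3' : 1 - ((1 - l) / (1 + 2 * l)) ^ 3 = 0 := by
      simpa [hl3, hl, hl1] using hparam
    rw [hl3, hl3']
  · have hl3' : 1 - ((1 - l) / (1 + 2 * l)) ^ 3 ≠ 0 := fun h ↦ by
      simp [h, h9, hl0, hl3] at hparam
    refine add_right_cancel (b := (Fintype.card F : R)) ?_
    rw [cubicSum_add_card hη hl3, cubicSum_add_card hη hl3',
      cubicCurveCard_one_sub_pow_three hω hl0 hl1 hl]

theorem statement_2_general {F : Type} [Field F] [Fintype F] {η : MulChar F ℂ}
    (hη : orderOf η = 3) {l : F} (hl : 1 + 2 * l ≠ 0) :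
    twoF1 η (η ^ 2) 1 (1 - l ^ 3) =
      twoF1 η (η ^ 2) 1 (((1 - l) / (1 + 2 * l)) ^ 3) := by
  simp only [twoF1, P1_sq_self_one_eq_cubicSum hη, cubicSum_one_sub_pow_three hη hl]

/-- finite-field analogue of the Borwein cubic transformation for `₂F₁`. -/
theorem statement_2 (p : ℕ) [Fact p.Prime] (hp : p % 3 = 1)
    (η₃ : MulChar (ZMod p) ℂ) (hη : orderOf η₃ = 3)
    (lam : ZMod p) (h : 1 + 2 * lam ≠ 0) :
    twoF1 η₃ (η₃ ^ 2) 1 (1 - lam ^ 3) =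
      twoF1 η₃ (η₃ ^ 2) 1 (((1 - lam) / (1 + 2 * lam)) ^ 3) :=
  statement_2_general hη h
end

section
/- Let q be a power of an odd prime. Let A, B₁, B₂, C be multiplicative characters of 𝔽_q^× with A ≠ ε, B₁B₂ ≠ ε, A ≠ C, and B₁B₂ ≠ C. Then for any λ ∈ 𝔽_q, ℙ_D^{(2)}[A; B₁, B₂; C; λ, λ] = (C·(AB₁B₂)⁻¹)(1−λ) · ( J(A, CĀ) / J(C·(B₁B₂)⁻¹, B₁B₂) ) · ℙ_D^{(1)}[C·(B₁B₂)⁻¹; C·Ā; C; λ] + δ(1−λ)·J(A, (AB₁B₂)⁻¹·C). -/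
/-!
Classically, substituting `y = t / (1 + t)` and expanding `(1 - λy)^(-b)` as a beta integral turns
`B(b, c - b) ∫ y^(a-1) (1-y)^(c-a-1) (1-λy)^(-b) dy` into the double integral
`∬ t^(a-1) s^(b-1) (1 + t + s + (1-λ)ts)^(-c) dt ds`. The inversion `t ↦ 1 / ((1-λ)s)`,
`s ↦ 1 / ((1-λ)t)` sends `1 + t + s + (1-λ)ts` to a monomial multiple of itself, so it
exchanges `(a, b)` with `(c - b, c - a)`. The same substitutions work for character sums over
`F`, and comparing the two expressions gives the reduction formula when `λ ≠ 1`.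
-/

open Finset

section CharacterSums

variable {F R : Type*} [Field F] [CommRing R]

lemma mulChar_one_sub_inv_one_add_mul (χ ψ : MulChar F R) (t : F) :
    χ (1 - (1 + t)⁻¹) * (ψ * χ⁻¹) (1 + t)⁻¹ = χ t * ψ⁻¹ (1 + t) := by
  rcases eq_or_ne (1 + t) 0 with ht | ht
  · simp [ht, MulChar.map_zero]
  have one_sub : 1 - (1 + t)⁻¹ = t * (1 + t)⁻¹ := by
    field_simp
    ring
  have cancel : χ (1 + t) * χ (1 + t)⁻¹ = 1 := by
    rw [← map_mul, mul_inv_cancel₀ ht, map_one]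
  rw [one_sub]
  simp only [map_mul, MulChar.mul_apply, MulChar.inv_apply', inv_inv]
  linear_combination χ t * ψ (1 + t)⁻¹ * cancel

variable [Fintype F]

/-- The character sum analogue of the double integral
`∬ t^(a-1) s^(b-1) (1 + t + s + m t s)^(-c) dt ds`, through which the period functions
`ℙ_D^{(1)}` are compared. -/
noncomputable def doubleCharSum (A B C : MulChar F R) (m : F) : R :=
  ∑ t : F, ∑ s : F, A t * B s * C⁻¹ (1 + t + s + m * t * s)

lemma doubleCharSum_eq_mul_doubleCharSum (A B C : MulChar F R) {m : F} (hm : m ≠ 0) :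
    doubleCharSum A B C m =
      (C * (A * B)⁻¹) m * doubleCharSum (C * B⁻¹) (C * A⁻¹) C m := by
  let e : F ≃ F := (Equiv.mulLeft₀ m hm).trans (Equiv.inv F)
  have he (x : F) : e x = (m * x)⁻¹ := rfl
  unfold doubleCharSum
  rw [sum_comm, ← e.sum_comp, mul_sum]
  refine sum_congr rfl fun t _ => ?_
  rw [← e.sum_comp, mul_sum]
  refine sum_congr rfl fun s _ => ?_
  rcases eq_or_ne t 0 with rfl | ht
  · simp [he, MulChar.map_zero]
  rcases eq_or_ne s 0 with rfl | hs
  · simp [he, MulChar.map_zero]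
  have form_inv : 1 + e s + e t + m * e s * e t = (m * t * s)⁻¹ * (1 + t + s + m * t * s) := by
    rw [he, he]
    field_simp
    ring
  rw [form_inv, he, he]
  simp only [mul_inv, map_mul, MulChar.mul_apply, MulChar.inv_apply', inv_inv]
  ring

-- Away from `t = -1` this is `y = t / (1 + t)`; the convention `0⁻¹ = 0` sends `t = -1` to the
-- otherwise missing value `y = 1`, so the substitution is a bijection of `F`.
lemma sum_eq_sum_one_sub_inv_one_add {M : Type*} [AddCommMonoid M] (f : F → M) :
    ∑ y, f y = ∑ t, f (1 - (1 + t)⁻¹) :=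
  (((Equiv.addLeft 1).trans (Equiv.inv F)).trans (Equiv.subLeft 1)).sum_comp f |>.symm

lemma jacobiSum_mul_inv_eq_sum (χ ψ : MulChar F R) :
    jacobiSum χ (ψ * χ⁻¹) = ∑ t, χ t * ψ⁻¹ (1 + t) := by
  rw [jacobiSum, sum_eq_sum_one_sub_inv_one_add]
  simp only [sub_sub_cancel, mulChar_one_sub_inv_one_add_mul]

lemma sum_mul_inv_add_mul [IsDomain R] {B C : MulChar F R} (hB : B ≠ 1) (hBC : B ≠ C) (u v : F) :
    ∑ s, B s * C⁻¹ (u + v * s) = (C⁻¹ * B) u * B⁻¹ v * jacobiSum B (C * B⁻¹) := by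
  rcases eq_or_ne u 0 with rfl | hu
  · have sum_zero : ∑ s, (B * C⁻¹) s = 0 :=
      MulChar.sum_eq_zero_of_ne_one (mul_inv_eq_one.not.mpr hBC)
    simp only [MulChar.mul_apply] at sum_zero
    simp [MulChar.map_zero, mul_left_comm _ (C⁻¹ v), ← mul_sum, sum_zero]
  rcases eq_or_ne v 0 with rfl | hv
  · simp [← sum_mul, MulChar.sum_eq_zero_of_ne_one hB, MulChar.map_zero]
  rw [jacobiSum_mul_inv_eq_sum, mul_sum,
    ← Equiv.sum_comp (Equiv.mulLeft₀ (u * v⁻¹) (mul_ne_zero hu (inv_ne_zero hv)))]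
  refine sum_congr rfl fun s _ => ?_
  have factor_u : u + v * (u * v⁻¹ * s) = u * (1 + s) := by
    field_simp
  rw [Equiv.mulLeft₀_apply, factor_u]
  simp only [map_mul, MulChar.mul_apply, MulChar.inv_apply' B]
  ring

lemma doubleCharSum_eq_sum_mul_jacobiSum [IsDomain R] (A : MulChar F R) {B C : MulChar F R}
    (hB : B ≠ 1) (hBC : B ≠ C) (m : F) :
    doubleCharSum A B C m =
      (∑ t, A t * (C⁻¹ * B) (1 + t) * B⁻¹ (1 + m * t)) * jacobiSum B (C * B⁻¹) := by
  rw [doubleCharSum, sum_mul]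
  refine sum_congr rfl fun t _ => ?_
  calc ∑ s, A t * B s * C⁻¹ (1 + t + s + m * t * s)
      = A t * ∑ s, B s * C⁻¹ ((1 + t) + (1 + m * t) * s) := by
        rw [mul_sum]
        refine sum_congr rfl fun s _ => ?_
        ring_nf
    _ = _ := by
        rw [sum_mul_inv_add_mul hB hBC]
        ring

lemma jacobiSum_ne_zero {K : Type*} [Field K] (h : ringChar K ≠ ringChar F) (χ : MulChar F K)
    {φ : MulChar F K} (hφ : φ ≠ 1) : jacobiSum χ φ ≠ 0 := by
  rcases eq_or_ne χ 1 with rfl | hχ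
  · simp [jacobiSum_one_nontrivial hφ]
  by_cases hχφ : χ * φ = 1
  · rw [eq_inv_of_mul_eq_one_right hχφ, jacobiSum_nontrivial_inv hχ, neg_ne_zero,
      MulChar.apply_ne_zero_iff]
    exact isUnit_one.neg
  have card_ne_zero : (Fintype.card F : K) ≠ 0 := by
    obtain ⟨n, hp, hcard⟩ := FiniteField.card F (ringChar F)
    rw [hcard, Nat.cast_pow]
    exact pow_ne_zero _ fun hzero => h (CharP.ringChar_of_prime_eq_zero hp hzero)
  exact left_ne_zero_of_mul (jacobiSum_mul_jacobiSum_inv h hχ hφ hχφ ▸ card_ne_zero)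

end CharacterSums

section PeriodFunctions

variable {F : Type} [Field F] [Fintype F]

lemma jacobiSum'_eq_jacobiSum (A B : MulChar F ℂ) : jacobiSum' A B = jacobiSum A B := rfl

lemma P2_self (A B₁ B₂ C : MulChar F ℂ) (l : F) : P2 A B₁ B₂ C l l = P1 A (B₁ * B₂) C l := by
  simp only [P2, P1, mul_inv, MulChar.mul_apply, mul_assoc]

lemma P1_one (A B C : MulChar F ℂ) : P1 A B C 1 = jacobiSum' A ((A * B)⁻¹ * C) := by
  refine sum_congr rfl fun y _ => ?_
  simp only [mul_inv, MulChar.mul_apply, one_mul]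
  ring

lemma P1_eq_sum_one_add (A B C : MulChar F ℂ) (l : F) :
    P1 A B C l = ∑ t, A t * (C⁻¹ * B) (1 + t) * B⁻¹ (1 + (1 - l) * t) := by
  rw [P1, sum_eq_sum_one_sub_inv_one_add]
  refine sum_congr rfl fun t _ => ?_
  rw [sub_sub_cancel, mulChar_one_sub_inv_one_add_mul]
  rcases eq_or_ne (1 + t) 0 with ht | ht
  · simp [ht, MulChar.map_zero]
  have one_sub_mul : 1 - l * (1 - (1 + t)⁻¹) = (1 + (1 - l) * t) * (1 + t)⁻¹ := by
    field_simp
    ring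
  rw [one_sub_mul, map_mul, MulChar.mul_apply, MulChar.inv_apply' B (1 + t)⁻¹, inv_inv]
  ring

lemma P1_mul_jacobiSum (A : MulChar F ℂ) {B C : MulChar F ℂ} (hB : B ≠ 1) (hBC : B ≠ C) (l : F) :
    P1 A B C l * jacobiSum B (C * B⁻¹) = doubleCharSum A B C (1 - l) := by
  rw [P1_eq_sum_one_add, doubleCharSum_eq_sum_mul_jacobiSum A hB hBC]

lemma P1_eq_mul_P1 {A B C : MulChar F ℂ} (hA : A ≠ 1) (hB : B ≠ 1) (hAC : A ≠ C) (hBC : B ≠ C)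
    {l : F} (hl : l ≠ 1) :
    P1 A B C l = (C * (A * B)⁻¹) (1 - l) *
      (jacobiSum' A (C * A⁻¹) / jacobiSum' (C * B⁻¹) B) * P1 (C * B⁻¹) (C * A⁻¹) C l := by
  have hJ : jacobiSum (C * B⁻¹) B ≠ 0 :=
    jacobiSum_ne_zero (by simpa only [ringChar.eq_zero] using
      (CharP.ringChar_ne_zero_of_finite F).symm) _ hB
  have hCA : C * A⁻¹ ≠ 1 := mul_inv_eq_one.not.mpr hAC.symm
  have hCAC : C * A⁻¹ ≠ C := by simpa using hA
  have dual := P1_mul_jacobiSum (C * B⁻¹) hCA hCAC l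
  rw [mul_inv_rev, inv_inv, mul_comm A, mul_inv_cancel_left] at dual
  simp only [jacobiSum'_eq_jacobiSum]
  rw [mul_div_assoc', div_mul_eq_mul_div, eq_div_iff hJ]
  calc P1 A B C l * jacobiSum (C * B⁻¹) B
      = doubleCharSum A B C (1 - l) := by rw [jacobiSum_comm, P1_mul_jacobiSum A hB hBC]
    _ = (C * (A * B)⁻¹) (1 - l) * doubleCharSum (C * B⁻¹) (C * A⁻¹) C (1 - l) :=
        doubleCharSum_eq_mul_doubleCharSum A B C (sub_ne_zero.mpr hl.symm)
    _ = (C * (A * B)⁻¹) (1 - l) * jacobiSum A (C * A⁻¹) * P1 (C * B⁻¹) (C * A⁻¹) C l := by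
        rw [← dual, jacobiSum_comm A]
        ring

theorem statement_12_general (A B₁ B₂ C : MulChar F ℂ) (hA : A ≠ 1) (hB : B₁ * B₂ ≠ 1)
    (hAC : A ≠ C) (hBC : B₁ * B₂ ≠ C) (l : F) :
    P2 A B₁ B₂ C l l =
      (C * (A * B₁ * B₂)⁻¹) (1 - l) *
          (jacobiSum' A (C * A⁻¹) / jacobiSum' (C * (B₁ * B₂)⁻¹) (B₁ * B₂)) *
          P1 (C * (B₁ * B₂)⁻¹) (C * A⁻¹) C l +
        deltaC (1 - l) * jacobiSum' A ((A * B₁ * B₂)⁻¹ * C) := by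
  rw [P2_self, mul_assoc A]
  rcases eq_or_ne l 1 with rfl | hl
  · simp [P1_one, deltaC, MulChar.map_zero]
  · have hdelta : deltaC (1 - l) = 0 := if_neg (sub_ne_zero.mpr hl.symm)
    rw [hdelta, zero_mul, add_zero, P1_eq_mul_P1 hA hB hAC hBC hl]

end PeriodFunctions

/-- reduction formula for `ℙ_D^{(2)}` when `λ₁ = λ₂`. -/
theorem statement_12 (F : Type) [Field F] [Fintype F] (hq : Odd (Fintype.card F))
    (A B₁ B₂ C : MulChar F ℂ) (hA : A ≠ 1) (hB : B₁ * B₂ ≠ 1)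
    (hAC : A ≠ C) (hBC : B₁ * B₂ ≠ C) (l : F) :
    P2 A B₁ B₂ C l l =
      (C * (A * B₁ * B₂)⁻¹) (1 - l) *
          (jacobiSum' A (C * A⁻¹) / jacobiSum' (C * (B₁ * B₂)⁻¹) (B₁ * B₂)) *
          P1 (C * (B₁ * B₂)⁻¹) (C * A⁻¹) C l +
        deltaC (1 - l) * jacobiSum' A ((A * B₁ * B₂)⁻¹ * C) :=
  statement_12_general A B₁ B₂ C hA hB hAC hBC l
end
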